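/- In a canonical intersection-link representation of a cluster C of size k >= 3, walking along the boundary of the union of the unit squares of C, k-2 of the vertices appear exactly twice, forming two maximal sequences that occur in opposite orders, and these two sequences are separated by the two remaining vertices, each of which appears exactly once along the boundary. Consequently, such a cluster can be modeled in a PolyLink representation as a polygon with four sides in which one pair of antipodal sides carries the k-2 doubly-appearing vertices and the other two sides each carry one of the two remaining vertices. -/

import Mathlib

namespace Paper

/-! ### PolyLink representations -/

/-- The planar cross product. -/
def cross2 (a b : ℝ × ℝ) : ℝ := a.1 * b.2 - a.2 * b.1

/-- `corner` (with indices taken mod `σ`) lists the corners of a convex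
polygon in clockwise order: for every side, all other corners lie strictly on
its right. -/
def ConvexCW (corner : ℕ → ℝ × ℝ) (σ : ℕ) : Prop :=
  ∀ i < σ, ∀ j < σ, j ≠ i → j ≠ (i + 1) % σ →
    cross2 (corner ((i + 1) % σ) - corner i) (corner j - corner i) < 0

/-- The point at parameter `t ∈ (0,1)` on the side from corner `i` to corner
`i+1` of the polygon with corner list `corner` and `σ` sides. -/
noncomputable def sidePt (corner : ℕ → ℝ × ℝ) (σ : ℕ) (i : ℕ) (t : ℝ) : ℝ × ℝ :=
  (1 - t) • corner (i % σ) + t • corner ((i + 1) % σ)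

/-- The closed region of the polygon. -/
noncomputable def polyRegion (corner : ℕ → ℝ × ℝ) (σ : ℕ) : Set (ℝ × ℝ) :=
  convexHull ℝ (corner '' {i | i < σ})

/-- Well-formedness of a PolyLink input with fixed sides: all polygons have an
even number (at least four) of sides, every vertex is associated with a pair of
antipodal sides `(pairOf v, pairOf v + σ/2)` of the polygon of its cluster, and
the specified side of every inter-cluster edge end is one of, the two sides
associated with the corresponding endpoint. -/
def PolyLinkInputWF {V K : Type} (G : SimpleGraph V) (clu : V → K)
    (nsides : K → ℕ) (pairOf : V → ℕ) (sides : V × V → ℕ) : Prop :=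
  (∀ k, 4 ≤ nsides k ∧ Even (nsides k)) ∧
  (∀ v, 2 * pairOf v < nsides (clu v)) ∧
  (∀ u w, G.Adj u w → clu u ≠ clu w →
    sides (u, w) = pairOf u ∨ sides (u, w) = pairOf u + nsides (clu u) / 2)

/-- The data of a PolyLink representation: the polygon corners of every
cluster, the positions (side parameters) of the two copies of every vertex on
its two antipodal sides (`false`: side `pairOf v`; `true`: the antipodal side),
and a curve for every directed inter-cluster edge. -/
structure PolyLinkRep (V K : Type) where
  corner : K → ℕ → ℝ × ℝ
  par : V → Bool → ℝ
  curve : V × V → ℝ → ℝ × ℝ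

namespace PolyLinkRep

variable {V K : Type}

/-- The attachment point of the end `u` of the inter-cluster edge `(u, w)`:
the copy of `u` lying on the specified side `sides (u, w)`. -/
noncomputable def attach (R : PolyLinkRep V K) (clu : V → K) (nsides : K → ℕ)
    (pairOf : V → ℕ) (sides : V × V → ℕ) (u w : V) : ℝ × ℝ :=
  sidePt (R.corner (clu u)) (nsides (clu u)) (sides (u, w))
    (if sides (u, w) = pairOf u then R.par u false else R.par u true)

/-- Validity of a PolyLink representation (fixed sides): polygons are convex,
pairwise disjoint, with clockwise corner order; the copies of the vertices of
a common side pair lie in its interiors, distinct vertices at distinct points,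
and the two copies of the vertices appear in opposite orders on the two
antipodal sides; every inter-cluster edge is a simple curve between the
specified copies of its endpoints avoiding all polygons, and no two
inter-cluster edges cross. -/
def IsValid (G : SimpleGraph V) (clu : V → K) (nsides : K → ℕ)
    (pairOf : V → ℕ) (sides : V × V → ℕ) (R : PolyLinkRep V K) : Prop :=
  (∀ k, ConvexCW (R.corner k) (nsides k)) ∧
  (∀ k k', k ≠ k' →
    Disjoint (polyRegion (R.corner k) (nsides k))
      (polyRegion (R.corner k') (nsides k'))) ∧
  (∀ v b, R.par v b ∈ Set.Ioo (0 : ℝ) 1) ∧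
  (∀ u v, u ≠ v → clu u = clu v → pairOf u = pairOf v →
    ∀ b, R.par u b ≠ R.par v b) ∧
  (∀ u v, clu u = clu v → pairOf u = pairOf v →
    (R.par u false < R.par v false ↔ R.par v true < R.par u true)) ∧
  (∀ u w : V, G.Adj u w → clu u ≠ clu w →
    ContinuousOn (R.curve (u, w)) (Set.Icc 0 1) ∧
    Set.InjOn (R.curve (u, w)) (Set.Icc 0 1) ∧
    R.curve (u, w) 0 = R.attach clu nsides pairOf sides u w ∧
    R.curve (u, w) 1 = R.attach clu nsides pairOf sides w u ∧
    (∀ t, R.curve (w, u) t = R.curve (u, w) (1 - t)) ∧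
    (∀ t ∈ Set.Ioo (0 : ℝ) 1, ∀ k,
      R.curve (u, w) t ∉ polyRegion (R.corner k) (nsides k))) ∧
  (∀ u w u' w', G.Adj u w → clu u ≠ clu w → G.Adj u' w' → clu u' ≠ clu w' →
    ¬(u = u' ∧ w = w') → ¬(u = w' ∧ w = u') →
    Disjoint (R.curve (u, w) '' Set.Ioo 0 1) (R.curve (u', w') '' Set.Ioo 0 1))

end PolyLinkRep

/-- PolyLink planarity with fixed sides: the flat clustered graph admits a
planar PolyLink representation. -/
def PolyLinkPlanar {V K : Type} (G : SimpleGraph V) (clu : V → K)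
    (nsides : K → ℕ) (pairOf : V → ℕ) (sides : V × V → ℕ) : Prop :=
  ∃ R : PolyLinkRep V K, R.IsValid G clu nsides pairOf sides

end Paper

namespace Paper

/-! ### Canonical intersection-link representations and clique planarity -/

/-- The closed unit square with upper-left corner `p`. -/
def ulSq (p : ℝ × ℝ) : Set (ℝ × ℝ) :=
  Set.Icc p.1 (p.1 + 1) ×ˢ Set.Icc (p.2 - 1) p.2

/-- The side `s` (`0`=top, `1`=right, `2`=bottom, `3`=left) of the unit square
with upper-left corner `p`. -/
def ulSide (p : ℝ × ℝ) (s : Fin 4) : Set (ℝ × ℝ) :=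
  if s = 0 then Set.Icc p.1 (p.1 + 1) ×ˢ ({p.2} : Set ℝ)
  else if s = 1 then ({p.1 + 1} : Set ℝ) ×ˢ Set.Icc (p.2 - 1) p.2
  else if s = 2 then Set.Icc p.1 (p.1 + 1) ×ˢ ({p.2 - 1} : Set ℝ)
  else ({p.1} : Set ℝ) ×ˢ Set.Icc (p.2 - 1) p.2

/-- The data of a canonical intersection-link representation: every vertex is
a unit square whose upper-left corner is at offset `off v` along a line of
slope one through the base point of its cluster; every directed inter-cluster
edge has an attachment point and a curve. -/
structure CanonicalRep (V K : Type) where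
  base : K → ℝ × ℝ
  off : V → ℝ
  attachPt : V × V → ℝ × ℝ
  curve : V × V → ℝ → ℝ × ℝ

namespace CanonicalRep

variable {V K : Type}

/-- The upper-left corner of the unit square of `v`. -/
def ul (R : CanonicalRep V K) (clu : V → K) (v : V) : ℝ × ℝ :=
  ((R.base (clu v)).1 + R.off v, (R.base (clu v)).2 + R.off v)

/-- The unit square of `v`. -/
def vsq (R : CanonicalRep V K) (clu : V → K) (v : V) : Set (ℝ × ℝ) :=
  ulSq (R.ul clu v)

/-- Validity of a canonical intersection-link representation with fixed sides:
two unit squares overlap iff there is an intra-cluster edge between their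
vertices; every inter-cluster edge is a simple curve attached at the specified
sides of the squares of its endpoints, avoiding all squares, and no two
inter-cluster edges cross. -/
def IsValid (G : SimpleGraph V) (clu : V → K) (sides : V × V → Fin 4)
    (R : CanonicalRep V K) : Prop :=
  (∀ u v : V, u ≠ v →
    ((interior (R.vsq clu u) ∩ interior (R.vsq clu v)).Nonempty ↔
      (G.Adj u v ∧ clu u = clu v))) ∧
  (∀ u w : V, G.Adj u w → clu u ≠ clu w →
    R.attachPt (u, w) ∈ ulSide (R.ul clu u) (sides (u, w)) ∧
    (∀ v, v ≠ u → R.attachPt (u, w) ∉ interior (R.vsq clu v)) ∧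
    ContinuousOn (R.curve (u, w)) (Set.Icc 0 1) ∧
    Set.InjOn (R.curve (u, w)) (Set.Icc 0 1) ∧
    R.curve (u, w) 0 = R.attachPt (u, w) ∧
    R.curve (u, w) 1 = R.attachPt (w, u) ∧
    (∀ t, R.curve (w, u) t = R.curve (u, w) (1 - t)) ∧
    (∀ t ∈ Set.Ioo (0 : ℝ) 1, ∀ v, R.curve (u, w) t ∉ R.vsq clu v)) ∧
  (∀ u w u' w', G.Adj u w → clu u ≠ clu w → G.Adj u' w' → clu u' ≠ clu w' →
    ¬(u = u' ∧ w = w') → ¬(u = w' ∧ w = u') →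
    Disjoint (R.curve (u, w) '' Set.Ioo 0 1) (R.curve (u', w') '' Set.Ioo 0 1))

end CanonicalRep

/-- Clique planarity with fixed sides: the flat clustered graph (whose clusters
are cliques) admits a canonical intersection-link representation with no two
inter-cluster edges crossing, respecting the specified sides. -/
def CliquePlanarFS {V K : Type} (G : SimpleGraph V) (clu : V → K)
    (sides : V × V → Fin 4) : Prop :=
  ∃ R : CanonicalRep V K, R.IsValid G clu sides

/-! ### Boundary orders (for canonical cluster representations) -/

/-- The boundary set `Bd` decomposes, along a periodic simple parameterization,
into consecutive arcs lying on the pieces `piece (l i)`, in the cyclic order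
given by the list `l`. -/
def BoundaryOrder {α : Type} (Bd : Set (ℝ × ℝ)) (piece : α → Set (ℝ × ℝ))
    (l : List α) : Prop :=
  ∃ (γ : ℝ → ℝ × ℝ) (τ : ℕ → ℝ),
    Continuous γ ∧ (∀ t, γ (t + 1) = γ t) ∧ Set.InjOn γ (Set.Ico (0 : ℝ) 1) ∧
    Set.range γ = Bd ∧ τ 0 = 0 ∧ τ l.length = 1 ∧
    (∀ i < l.length, τ i < τ (i + 1)) ∧
    ∀ i (hi : i < l.length), γ '' Set.Icc (τ i) (τ (i + 1)) ⊆ piece (l.get ⟨i, hi⟩)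

end Paper

namespace Paper

/-!
In coordinates `(s, d)` along and across the line of slope one, the square at offset `c` is the
region `|d| ≤ 1/2 - |s - c|`. Hence the union of the squares is `|d| ≤ h s`, where `h` is the
maximum of these tent functions, and its boundary is `|d| = h s`. Since consecutive squares
overlap, `h` is positive inside an interval and vanishes at its ends, so the boundary is a closed
curve made of the graphs of `-h` and `h`. The square at `c` meets it exactly where its tent attains
the maximum, that is, above and below the Voronoi cell of `c` among the offsets. The cells occur in
increasing order along one graph and in decreasing order along the other; the two copies of a cell
are joined into a single arc only for the first and the last offset, whose cells contain an end of
the interval.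
-/

/-! ### Symmetric regions -/

section SymmRegion

variable {X : Type*}

/-- The region between the graphs of `-f` and `f`. -/
def symmRegion (f : X → ℝ) : Set (X × ℝ) := {q | |q.2| ≤ f q.1}

/-- The union of the graphs of `-f` and `f` over the set where `f` is nonnegative; it is the
boundary of `symmRegion f` when `f` is continuous. -/
def symmGraph (f : X → ℝ) : Set (X × ℝ) := {q | |q.2| = f q.1}

theorem frontier_symmRegion [TopologicalSpace X] {f : X → ℝ} (hf : Continuous f) :
    frontier (symmRegion f) = symmGraph f := by
  have hsub : frontier (symmRegion f) ⊆ symmGraph f :=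
    frontier_le_subset_eq (by fun_prop) (by fun_prop)
  refine hsub.antisymm ?_
  rintro ⟨x, d⟩ (hd : |d| = f x)
  refine ⟨subset_closure hd.le, fun hint => ?_⟩
  have hfiber : (fun y => (x, y)) ⁻¹' symmRegion f = Set.Icc (-f x) (f x) := by
    ext y; simp [symmRegion, abs_le]
  have hd' : d ∈ interior (Set.Icc (-f x) (f x)) :=
    hfiber ▸ preimage_interior_subset_interior_preimage (by fun_prop) hint
  rw [interior_Icc] at hd'
  exact (abs_lt.2 hd').ne hd

theorem symmGraph_inter_symmGraph (f g : X → ℝ) :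
    symmGraph f ∩ symmGraph g =
      {s | 0 ≤ f s ∧ f s = g s}.graphOn (-f) ∪ {s | 0 ≤ f s ∧ f s = g s}.graphOn f := by
  ext ⟨s, d⟩
  simp only [symmGraph, Set.mem_inter_iff, Set.mem_union, Set.mem_graphOn, Set.mem_ofPred_eq,
    Pi.neg_apply]
  constructor
  · rintro ⟨hf, hg⟩
    have hs : 0 ≤ f s ∧ f s = g s := ⟨hf ▸ abs_nonneg d, hf.symm.trans hg⟩
    rcases abs_choice d with h | h
    · exact Or.inr ⟨hs, by linarith⟩
    · exact Or.inl ⟨hs, by linarith⟩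
  · rintro (⟨⟨h0, hfg⟩, rfl⟩ | ⟨⟨h0, hfg⟩, rfl⟩)
    · rw [abs_neg, abs_of_nonneg h0]; exact ⟨rfl, hfg⟩
    · rw [abs_of_nonneg h0]; exact ⟨rfl, hfg⟩

end SymmRegion

theorem isConnected_graphOn {X Y : Type*} [TopologicalSpace X] [TopologicalSpace Y] {f : X → Y}
    {s : Set X} (hs : IsConnected s) (hf : Continuous f) : IsConnected (s.graphOn f) :=
  hs.image _ (by fun_prop)

theorem disjoint_graphOn_neg_of_pos {X : Type*} {f : X → ℝ} {s : Set X}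
    (hpos : ∀ x ∈ s, 0 < f x) : Disjoint (s.graphOn (-f)) (s.graphOn f) := by
  rw [Set.disjoint_left]
  rintro ⟨x, d⟩ hneg hd
  rw [Set.mem_graphOn] at hneg hd
  have := hpos x hd.1
  simp only [Pi.neg_apply] at hneg
  linarith [hneg.2, hd.2]

theorem not_isPreconnected_graphOn_neg_union {X : Type*} [TopologicalSpace X] {f : X → ℝ}
    {s : Set X} (hs : s.Nonempty) (hpos : ∀ x ∈ s, 0 < f x) :
    ¬ IsPreconnected (s.graphOn (-f) ∪ s.graphOn f) := by
  intro hconn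
  obtain ⟨x, hx⟩ := hs
  have hneg_mem : (x, -f x) ∈ s.graphOn (-f) ∪ s.graphOn f := Or.inl ⟨x, hx, rfl⟩
  have hpos_mem : (x, f x) ∈ s.graphOn (-f) ∪ s.graphOn f := Or.inr ⟨x, hx, rfl⟩
  have hsub : s.graphOn (-f) ∪ s.graphOn f ⊆ {q | q.2 < 0} ∪ {q | 0 < q.2} := by
    rintro _ (⟨y, hy, rfl⟩ | ⟨y, hy, rfl⟩)
    · exact Or.inl (neg_lt_zero.2 (hpos y hy))
    · exact Or.inr (hpos y hy)
  have hdisj : Disjoint {q : X × ℝ | q.2 < 0} {q | 0 < q.2} :=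
    Set.disjoint_left.2 fun q (hneg : q.2 < 0) (hpos : 0 < q.2) => hneg.asymm hpos
  rcases IsPreconnected.subset_or_subset (isOpen_lt continuous_snd continuous_const)
    (isOpen_lt continuous_const continuous_snd) hdisj hsub hconn with h | h
  · exact (hpos x hx).not_gt (h hpos_mem)
  · exact (neg_lt_zero.2 (hpos x hx)).not_gt (h hneg_mem)

/-! ### Maxima of tent functions -/

/-- The tent function of half-width and height `1/2` centred at `c`: in diagonal coordinates, the
half-height of the unit square with centre `(c, 0)`. -/
noncomputable def tent (c s : ℝ) : ℝ := 1 / 2 - |s - c|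

theorem continuous_tent (c : ℝ) : Continuous (tent c) := by
  unfold tent; fun_prop

theorem tent_self (c : ℝ) : tent c c = 1 / 2 := by
  simp [tent]

theorem tent_sub_half (c : ℝ) : tent c (c - 1 / 2) = 0 := by
  norm_num [tent]

theorem tent_add_half (c : ℝ) : tent c (c + 1 / 2) = 0 := by
  norm_num [tent]

theorem tent_le_tent_iff_add_le {c c' : ℝ} (h : c < c') (s : ℝ) :
    tent c s ≤ tent c' s ↔ (c + c') / 2 ≤ s := by
  rw [tent, tent, sub_le_sub_iff_left, ← sq_le_sq]
  constructor <;> intro hs <;> nlinarith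

theorem tent_le_tent_iff_le_add {c c' : ℝ} (h : c < c') (s : ℝ) :
    tent c' s ≤ tent c s ↔ s ≤ (c + c') / 2 := by
  rw [tent, tent, sub_le_sub_iff_left, ← sq_le_sq]
  constructor <;> intro hs <;> nlinarith

/-- The maximum of the tent functions centred at the points `δ i`: in diagonal coordinates, the
half-height of the union of the squares. -/
noncomputable def profile {ι : Type*} [Fintype ι] [Nonempty ι] (δ : ι → ℝ) (s : ℝ) : ℝ :=
  Finset.univ.sup' Finset.univ_nonempty fun i => tent (δ i) s

section Profile

variable {ι : Type*} [Fintype ι] [Nonempty ι] (δ : ι → ℝ)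

theorem continuous_profile : Continuous (profile δ) :=
  Continuous.finset_sup'_apply _ fun i _ => continuous_tent (δ i)

theorem tent_le_profile (i : ι) (s : ℝ) : tent (δ i) s ≤ profile δ s :=
  Finset.le_sup' (fun i => tent (δ i) s) (Finset.mem_univ i)

theorem exists_profile_eq_tent (s : ℝ) : ∃ i, profile δ s = tent (δ i) s := by
  obtain ⟨i, -, hi⟩ := Finset.exists_mem_eq_sup' Finset.univ_nonempty fun i => tent (δ i) s
  exact ⟨i, hi⟩

theorem profile_eq_tent_iff_forall_le (i : ι) (s : ℝ) :
    profile δ s = tent (δ i) s ↔ ∀ j, tent (δ j) s ≤ tent (δ i) s := by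
  rw [← (tent_le_profile δ i s).ge_iff_eq', profile, Finset.sup'_le_iff]
  simp only [Finset.mem_univ, true_imp_iff]

theorem symmRegion_profile : symmRegion (profile δ) = ⋃ i, symmRegion (tent (δ i)) := by
  ext ⟨s, d⟩
  simp [symmRegion, profile, Finset.le_sup'_iff]

/-- The Voronoi cell of `δ i` among the offsets `δ`, truncated to the set where the profile is
nonnegative: the projection to the diagonal of the part of the boundary of the union of the squares
that lies on the boundary of the `i`-th square. -/
def exposedCell (i : ι) : Set ℝ :=
  {s | 0 ≤ profile δ s ∧ profile δ s = tent (δ i) s}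

theorem symmGraph_profile_inter_tent (i : ι) :
    symmGraph (profile δ) ∩ symmGraph (tent (δ i)) =
      (exposedCell δ i).graphOn (-profile δ) ∪ (exposedCell δ i).graphOn (profile δ) :=
  symmGraph_inter_symmGraph _ _

end Profile

/-! ### Voronoi cells -/

section Cells

variable {ι : Type*} [LinearOrder ι] [Fintype ι] {δ : ι → ℝ}

theorem profile_eq_tent_iff [Nonempty ι] (hδ : StrictMono δ) (i : ι) (s : ℝ) :
    profile δ s = tent (δ i) s ↔
      (∀ j, j ⋖ i → (δ j + δ i) / 2 ≤ s) ∧ ∀ j, i ⋖ j → s ≤ (δ i + δ j) / 2 := by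
  rw [profile_eq_tent_iff_forall_le]
  constructor
  · exact fun h => ⟨fun j hj => (tent_le_tent_iff_add_le (hδ hj.lt) s).1 (h j),
      fun j hj => (tent_le_tent_iff_le_add (hδ hj.lt) s).1 (h j)⟩
  · rintro ⟨hleft, hright⟩ j
    rcases lt_trichotomy j i with hji | rfl | hij
    · obtain ⟨p, hjp, hpi⟩ := exists_le_covBy_of_lt hji
      rw [tent_le_tent_iff_add_le (hδ hji)]
      linarith [hleft p hpi, hδ.monotone hjp]
    · exact le_rfl
    · obtain ⟨p, hip, hpj⟩ := exists_covBy_le_of_lt hij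
      rw [tent_le_tent_iff_le_add (hδ hij)]
      linarith [hright p hip, hδ.monotone hpj]

theorem mem_exposedCell_self [Nonempty ι] (hδ : StrictMono δ) (i : ι) : δ i ∈ exposedCell δ i := by
  have hcell : profile δ (δ i) = tent (δ i) (δ i) := (profile_eq_tent_iff hδ i _).2
    ⟨fun j hj => by linarith [hδ hj.lt], fun j hj => by linarith [hδ hj.lt]⟩
  refine ⟨?_, hcell⟩
  rw [hcell, tent_self]
  norm_num

variable [BoundedOrder ι]

theorem bot_sub_half_mem_exposedCell (hδ : StrictMono δ) : δ ⊥ - 1 / 2 ∈ exposedCell δ ⊥ := by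
  have hcell : profile δ (δ ⊥ - 1 / 2) = tent (δ ⊥) (δ ⊥ - 1 / 2) :=
    (profile_eq_tent_iff hδ _ _).2
      ⟨fun j hj => absurd hj.lt not_lt_bot, fun j hj => by linarith [hδ hj.lt]⟩
  exact ⟨(hcell.trans (tent_sub_half _)).ge, hcell⟩

theorem top_add_half_mem_exposedCell (hδ : StrictMono δ) : δ ⊤ + 1 / 2 ∈ exposedCell δ ⊤ := by
  have hcell : profile δ (δ ⊤ + 1 / 2) = tent (δ ⊤) (δ ⊤ + 1 / 2) :=
    (profile_eq_tent_iff hδ _ _).2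
      ⟨fun j hj => by linarith [hδ hj.lt], fun j hj => absurd hj.lt not_top_lt⟩
  exact ⟨(hcell.trans (tent_add_half _)).ge, hcell⟩

theorem profile_bot_sub_half (hδ : StrictMono δ) : profile δ (δ ⊥ - 1 / 2) = 0 :=
  (bot_sub_half_mem_exposedCell hδ).2.trans (tent_sub_half _)

theorem profile_top_add_half (hδ : StrictMono δ) : profile δ (δ ⊤ + 1 / 2) = 0 :=
  (top_add_half_mem_exposedCell hδ).2.trans (tent_add_half _)

theorem mem_Icc_of_profile_nonneg (hδ : Monotone δ) {s : ℝ} (hs : 0 ≤ profile δ s) :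
    s ∈ Set.Icc (δ ⊥ - 1 / 2) (δ ⊤ + 1 / 2) := by
  obtain ⟨i, hi⟩ := exists_profile_eq_tent δ s
  have habs : |s - δ i| ≤ 1 / 2 := by rw [hi, tent] at hs; linarith
  obtain ⟨h₁, h₂⟩ := abs_le.1 habs
  exact ⟨by linarith [hδ (bot_le : ⊥ ≤ i)], by linarith [hδ (le_top : i ≤ ⊤)]⟩

-- A nearest offset at distance at least `1/2` would have a neighbour on the side of `s`, at
-- distance less than `1` from it and hence even nearer to `s`.
theorem profile_pos (hδ : StrictMono δ) (hov : ∀ i j, i ⋖ j → δ j - δ i < 1) {s : ℝ}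
    (hs : s ∈ Set.Ioo (δ ⊥ - 1 / 2) (δ ⊤ + 1 / 2)) : 0 < profile δ s := by
  obtain ⟨i, hi⟩ := exists_profile_eq_tent δ s
  obtain ⟨hleft, hright⟩ := (profile_eq_tent_iff hδ i s).1 hi
  suffices hnear : |s - δ i| < 1 / 2 by rw [hi, tent]; linarith
  refine abs_lt.2 ⟨?_, ?_⟩
  · rcases (bot_le : ⊥ ≤ i).eq_or_lt with rfl | hbot
    · linarith [hs.1]
    · obtain ⟨j, -, hj⟩ := exists_le_covBy_of_lt hbot
      linarith [hleft j hj, hov j i hj]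
  · rcases (le_top : i ≤ ⊤).eq_or_lt with rfl | htop
    · linarith [hs.2]
    · obtain ⟨j, hj, -⟩ := exists_covBy_le_of_lt htop
      linarith [hright j hj, hov i j hj]

theorem profile_pos_of_mem_exposedCell (hδ : StrictMono δ) (hov : ∀ i j, i ⋖ j → δ j - δ i < 1)
    {i : ι} (hbot : i ≠ ⊥) (htop : i ≠ ⊤) {s : ℝ} (hs : s ∈ exposedCell δ i) :
    0 < profile δ s := by
  obtain ⟨hleft, hright⟩ := (profile_eq_tent_iff hδ i s).1 hs.2
  obtain ⟨j, -, hj⟩ := exists_le_covBy_of_lt (bot_lt_iff_ne_bot.2 hbot)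
  obtain ⟨l, hl, -⟩ := exists_covBy_le_of_lt (lt_top_iff_ne_top.2 htop)
  have hbot_le := hδ.monotone (bot_le : ⊥ ≤ j)
  have hle_top := hδ.monotone (le_top : l ≤ ⊤)
  exact profile_pos hδ hov
    ⟨by linarith [hleft j hj, hδ hj.lt], by linarith [hright l hl, hδ hl.lt]⟩

theorem profile_nonneg_iff (hδ : StrictMono δ) (hov : ∀ i j, i ⋖ j → δ j - δ i < 1) (s : ℝ) :
    0 ≤ profile δ s ↔ s ∈ Set.Icc (δ ⊥ - 1 / 2) (δ ⊤ + 1 / 2) := by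
  refine ⟨mem_Icc_of_profile_nonneg hδ.monotone, fun ⟨h₁, h₂⟩ => ?_⟩
  rcases h₁.eq_or_lt with rfl | h₁
  · exact (profile_bot_sub_half hδ).ge
  rcases h₂.eq_or_lt with rfl | h₂
  · exact (profile_top_add_half hδ).ge
  exact (profile_pos hδ hov ⟨h₁, h₂⟩).le

theorem isConnected_exposedCell (hδ : StrictMono δ) (hov : ∀ i j, i ⋖ j → δ j - δ i < 1) (i : ι) :
    IsConnected (exposedCell δ i) := by
  refine ⟨⟨δ i, mem_exposedCell_self hδ i⟩, Set.OrdConnected.isPreconnected ⟨?_⟩⟩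
  rintro x ⟨hx, hxi⟩ y ⟨hy, hyi⟩ z ⟨hxz, hzy⟩
  rw [profile_nonneg_iff hδ hov] at hx hy
  rw [profile_eq_tent_iff hδ] at hxi hyi
  exact ⟨(profile_nonneg_iff hδ hov z).2 ⟨hx.1.trans hxz, hzy.trans hy.2⟩,
    (profile_eq_tent_iff hδ i z).2
      ⟨fun j hj => (hxi.1 j hj).trans hxz, fun j hj => hzy.trans (hyi.2 j hj)⟩⟩

theorem isConnected_symmGraph_profile_inter_tent_of_zero (hδ : StrictMono δ)
    (hov : ∀ i j, i ⋖ j → δ j - δ i < 1) {i : ι} {s : ℝ} (hs : s ∈ exposedCell δ i)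
    (hzero : profile δ s = 0) :
    IsConnected (symmGraph (profile δ) ∩ symmGraph (tent (δ i))) := by
  have hcell := isConnected_exposedCell hδ hov i
  have hcont := continuous_profile δ
  rw [symmGraph_profile_inter_tent]
  refine (isConnected_graphOn hcell hcont.neg).union ⟨(s, 0), ?_, ?_⟩
    (isConnected_graphOn hcell hcont) <;> simp [hs, hzero]

theorem exists_two_arcs_symmGraph_profile_inter_tent (hδ : StrictMono δ)
    (hov : ∀ i j, i ⋖ j → δ j - δ i < 1) {i : ι} (hbot : i ≠ ⊥) (htop : i ≠ ⊤) :
    ¬ IsPreconnected (symmGraph (profile δ) ∩ symmGraph (tent (δ i))) ∧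
      ∃ A B : Set (ℝ × ℝ), IsConnected A ∧ IsConnected B ∧ Disjoint A B ∧
        A ∪ B = symmGraph (profile δ) ∩ symmGraph (tent (δ i)) := by
  have hpos : ∀ s ∈ exposedCell δ i, 0 < profile δ s :=
    fun s hs => profile_pos_of_mem_exposedCell hδ hov hbot htop hs
  have hcell := isConnected_exposedCell hδ hov i
  have hcont := continuous_profile δ
  rw [symmGraph_profile_inter_tent]
  exact ⟨not_isPreconnected_graphOn_neg_union ⟨_, mem_exposedCell_self hδ i⟩ hpos,
    _, _, isConnected_graphOn hcell hcont.neg, isConnected_graphOn hcell hcont,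
    disjoint_graphOn_neg_of_pos hpos, rfl⟩

end Cells

/-! ### The closed curve bounding an arch -/

/-- `f` is continuous, positive exactly on the interval `(u, v)` and zero exactly at its ends, so
that `symmGraph f` is a simple closed curve. -/
structure IsArch (f : ℝ → ℝ) (u v : ℝ) : Prop where
  continuous : Continuous f
  lt : u < v
  left : f u = 0
  right : f v = 0
  pos : ∀ s ∈ Set.Ioo u v, 0 < f s
  mem_Icc_of_nonneg : ∀ s, 0 ≤ f s → s ∈ Set.Icc u v

theorem isArch_profile {ι : Type*} [LinearOrder ι] [Fintype ι] [BoundedOrder ι] {δ : ι → ℝ}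
    (hδ : StrictMono δ) (hov : ∀ i j, i ⋖ j → δ j - δ i < 1) :
    IsArch (profile δ) (δ ⊥ - 1 / 2) (δ ⊤ + 1 / 2) where
  continuous := continuous_profile δ
  lt := by linarith [hδ.monotone (bot_le : (⊥ : ι) ≤ ⊤)]
  left := profile_bot_sub_half hδ
  right := profile_top_add_half hδ
  pos _ := profile_pos hδ hov
  mem_Icc_of_nonneg _ := mem_Icc_of_profile_nonneg hδ.monotone

/-- The abscissa of the point at angle `θ` of the circle with diameter `[u, v]`, with `θ` measured
from the left end `u`. -/
noncomputable def abscissa (u v : ℝ) (θ : Real.Angle) : ℝ := (u + v) / 2 - (v - u) / 2 * θ.cos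

/-- The angle in `[0, π]` at which `abscissa u v` takes the value `s`. -/
noncomputable def abscissaAngle (u v s : ℝ) : ℝ := Real.arccos ((u + v - 2 * s) / (v - u))

section Abscissa

variable {u v : ℝ}

theorem abscissa_zero : abscissa u v 0 = u := by
  rw [abscissa, Real.Angle.cos_zero]; ring

theorem abscissa_pi : abscissa u v (Real.pi : ℝ) = v := by
  rw [abscissa, Real.Angle.cos_coe_pi]; ring

theorem abscissa_neg (θ : Real.Angle) : abscissa u v (-θ) = abscissa u v θ := by
  simp only [abscissa, Real.Angle.cos_neg]

theorem abscissa_two_pi_sub (θ : ℝ) :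
    abscissa u v ((2 * Real.pi - θ : ℝ) : Real.Angle) = abscissa u v θ := by
  simp [abscissa, Real.Angle.cos_coe]

theorem continuous_abscissa : Continuous (abscissa u v) := by
  have := Real.Angle.continuous_cos
  unfold abscissa; fun_prop

theorem abscissa_eq_abscissa_iff (huv : u < v) {θ ψ : Real.Angle} :
    abscissa u v θ = abscissa u v ψ ↔ θ = ψ ∨ θ = -ψ := by
  rw [abscissa, abscissa, sub_right_inj, mul_right_inj' (by linarith),
    Real.Angle.cos_eq_iff_eq_or_eq_neg]

theorem abscissa_le_abscissa_iff (huv : u < v) {θ ψ : ℝ} :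
    abscissa u v θ ≤ abscissa u v ψ ↔ Real.cos ψ ≤ Real.cos θ := by
  rw [abscissa, abscissa, sub_le_sub_iff_left, mul_le_mul_iff_right₀ (by linarith),
    Real.Angle.cos_coe, Real.Angle.cos_coe]

theorem abscissa_mem_Icc (huv : u ≤ v) (θ : Real.Angle) : abscissa u v θ ∈ Set.Icc u v := by
  induction θ using Real.Angle.induction_on with | _ θ =>
  rw [abscissa, Real.Angle.cos_coe]
  constructor <;> nlinarith [Real.cos_le_one θ, Real.neg_one_le_cos θ]

theorem abscissa_le_of_abs_le (huv : u < v) {θ α : ℝ} (hθ : |θ| ≤ α) (hα : α ≤ Real.pi) :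
    abscissa u v θ ≤ abscissa u v α := by
  rw [abscissa_le_abscissa_iff huv, ← Real.cos_abs θ]
  exact Real.cos_le_cos_of_nonneg_of_le_pi (abs_nonneg θ) hα hθ

theorem le_abscissa_of_mem_Icc (huv : u < v) {θ α : ℝ} (hα : 0 ≤ α)
    (hθ : θ ∈ Set.Icc α (2 * Real.pi - α)) : abscissa u v α ≤ abscissa u v θ := by
  have habs : |Real.pi - θ| ≤ Real.pi - α := abs_le.2 ⟨by linarith [hθ.2], by linarith [hθ.1]⟩
  have hcos := Real.cos_le_cos_of_nonneg_of_le_pi (abs_nonneg _) (by linarith) habs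
  rw [Real.cos_abs, Real.cos_pi_sub, Real.cos_pi_sub] at hcos
  exact (abscissa_le_abscissa_iff huv).2 (neg_le_neg_iff.1 hcos)

theorem mapsTo_arccos_arg (huv : u < v) :
    Set.MapsTo (fun s => (u + v - 2 * s) / (v - u)) (Set.Icc u v) (Set.Icc (-1) 1) := by
  rintro s ⟨hus, hsv⟩
  have hpos : 0 < v - u := sub_pos.2 huv
  exact ⟨by rw [le_div_iff₀ hpos]; linarith, by rw [div_le_iff₀ hpos]; linarith⟩

theorem abscissa_abscissaAngle (huv : u < v) {s : ℝ} (hs : s ∈ Set.Icc u v) :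
    abscissa u v (abscissaAngle u v s) = s := by
  obtain ⟨h₁, h₂⟩ := mapsTo_arccos_arg huv hs
  have hne : v - u ≠ 0 := sub_ne_zero.2 huv.ne'
  rw [abscissa, abscissaAngle, Real.Angle.cos_coe, Real.cos_arccos h₁ h₂]
  field_simp
  ring

theorem strictMonoOn_abscissaAngle : StrictMonoOn (abscissaAngle u v) (Set.Icc u v) := by
  intro s hs t ht hst
  have huv : u < v := hs.1.trans_lt (hst.trans_le ht.2)
  exact Real.strictAntiOn_arccos (mapsTo_arccos_arg huv ht) (mapsTo_arccos_arg huv hs)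
    (div_lt_div_of_pos_right (by linarith) (sub_pos.2 huv))

theorem abscissaAngle_mem_Icc (s : ℝ) : abscissaAngle u v s ∈ Set.Icc 0 Real.pi :=
  ⟨Real.arccos_nonneg _, Real.arccos_le_pi _⟩

theorem abscissaAngle_mem_Ioo {s : ℝ} (hs : s ∈ Set.Ioo u v) :
    abscissaAngle u v s ∈ Set.Ioo 0 Real.pi := by
  have hs' := Set.Ioo_subset_Icc_self hs
  have huv : u ≤ v := hs'.1.trans hs'.2
  have hu := strictMonoOn_abscissaAngle (Set.left_mem_Icc.2 huv) hs' hs.1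
  have hv := strictMonoOn_abscissaAngle hs' (Set.right_mem_Icc.2 huv) hs.2
  exact ⟨(abscissaAngle_mem_Icc u).1.trans_lt hu, hv.trans_le (abscissaAngle_mem_Icc v).2⟩

end Abscissa

/-- The parameterization of `symmGraph f` by the circle, for an arch `f` on `[u, v]`: the graph of
`-f` is traversed from left to right, then the graph of `f` from right to left. -/
noncomputable def archCurve (f : ℝ → ℝ) (u v : ℝ) (θ : Real.Angle) : ℝ × ℝ :=
  (abscissa u v θ, if 0 ≤ θ.sin then -f (abscissa u v θ) else f (abscissa u v θ))

namespace IsArch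

variable {f : ℝ → ℝ} {u v : ℝ}

theorem apply_abscissa_of_sin_eq_zero (hf : IsArch f u v) {θ : Real.Angle} (hθ : θ.sin = 0) :
    f (abscissa u v θ) = 0 := by
  rcases Real.Angle.sin_eq_zero_iff.1 hθ with rfl | rfl
  · rw [abscissa_zero, hf.left]
  · rw [abscissa_pi, hf.right]

theorem apply_abscissa_pos (hf : IsArch f u v) {θ : Real.Angle} (hθ : θ.sin ≠ 0) :
    0 < f (abscissa u v θ) := by
  obtain ⟨hleft, hright⟩ := abscissa_mem_Icc hf.lt.le θ
  refine hf.pos _ ⟨hleft.lt_of_ne' fun h => hθ ?_, hright.lt_of_ne fun h => hθ ?_⟩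
  · rcases (abscissa_eq_abscissa_iff hf.lt).1 (h.trans abscissa_zero.symm) with rfl | rfl <;> simp
  · rcases (abscissa_eq_abscissa_iff hf.lt).1 (h.trans abscissa_pi.symm) with rfl | rfl <;> simp

theorem apply_abscissa_nonneg (hf : IsArch f u v) (θ : Real.Angle) : 0 ≤ f (abscissa u v θ) := by
  by_cases hθ : θ.sin = 0
  · exact (hf.apply_abscissa_of_sin_eq_zero hθ).ge
  · exact (hf.apply_abscissa_pos hθ).le

theorem archCurve_mem_symmGraph_iff (hf : IsArch f u v) {g : ℝ → ℝ} {θ : Real.Angle} :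
    archCurve f u v θ ∈ symmGraph g ↔ f (abscissa u v θ) = g (abscissa u v θ) := by
  have habs : |(archCurve f u v θ).2| = f (abscissa u v θ) := by
    rw [archCurve]
    split_ifs <;> simp [abs_of_nonneg (hf.apply_abscissa_nonneg θ)]
  rw [symmGraph, Set.mem_ofPred_eq, habs, archCurve]

theorem continuous_archCurve (hf : IsArch f u v) : Continuous (archCurve f u v) := by
  have hfa := hf.continuous.comp (continuous_abscissa (u := u) (v := v))
  refine continuous_abscissa.prodMk
    (Continuous.if_le hfa.neg hfa continuous_const Real.Angle.continuous_sin fun θ hθ => ?_)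
  simp [hf.apply_abscissa_of_sin_eq_zero hθ.symm]

theorem injective_archCurve (hf : IsArch f u v) : Function.Injective (archCurve f u v) := by
  intro θ ψ h
  obtain ⟨habs, hord⟩ := Prod.ext_iff.1 h
  rcases (abscissa_eq_abscissa_iff hf.lt).1 habs with rfl | rfl
  · rfl
  by_cases hsin : ψ.sin = 0
  · rcases Real.Angle.sin_eq_zero_iff.1 hsin with rfl | rfl
    · exact neg_zero
    · exact Real.Angle.neg_coe_pi
  have hpos := hf.apply_abscissa_pos hsin
  simp only [archCurve, abscissa_neg, Real.Angle.sin_neg, neg_nonneg] at hord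
  rcases lt_or_gt_of_ne hsin with hneg | hpos'
  · rw [if_pos hneg.le, if_neg hneg.not_ge] at hord
    linarith
  · rw [if_neg hpos'.not_ge, if_pos hpos'.le] at hord
    linarith

theorem range_archCurve (hf : IsArch f u v) : Set.range (archCurve f u v) = symmGraph f := by
  refine (Set.range_subset_iff.2 fun θ => hf.archCurve_mem_symmGraph_iff.2 rfl).antisymm ?_
  rintro ⟨s, d⟩ (hd : |d| = f s)
  have habs := abscissa_abscissaAngle hf.lt (hf.mem_Icc_of_nonneg s (hd ▸ abs_nonneg d))
  obtain ⟨θ, hθ⟩ : ∃ θ, θ = abscissaAngle u v s := ⟨_, rfl⟩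
  rw [← hθ] at habs
  have hsin : 0 ≤ (θ : Real.Angle).sin := by
    rw [Real.Angle.sin_coe, hθ]
    exact Real.sin_nonneg_of_mem_Icc (abscissaAngle_mem_Icc s)
  rcases le_or_gt d 0 with hle | hgt
  · refine ⟨θ, ?_⟩
    simp only [archCurve]
    rw [habs, if_pos hsin, ← hd, abs_of_nonpos hle, neg_neg]
  · rw [abs_of_pos hgt] at hd
    have hne : (θ : Real.Angle).sin ≠ 0 := fun h => by
      have := hf.apply_abscissa_of_sin_eq_zero h
      rw [habs, ← hd] at this
      exact hgt.ne' this
    refine ⟨-θ, ?_⟩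
    simp only [archCurve, abscissa_neg, Real.Angle.sin_neg, neg_nonneg]
    rw [habs, if_neg (hsin.lt_of_ne hne.symm).not_ge, hd]

end IsArch

/-! ### Arcs in order -/

/-- On the interval `[s, t]`, the curve `γ` runs through consecutive nondegenerate arcs lying on the
pieces listed by `l`. -/
inductive ArcChain {α X : Type*} (γ : ℝ → X) (piece : α → Set X) : ℝ → ℝ → List α → Prop
  | nil (s : ℝ) : ArcChain γ piece s s []
  | cons {s m t : ℝ} {i : α} {l : List α} (hlt : s < m)
      (harc : Set.MapsTo γ (Set.Icc s m) (piece i)) (hchain : ArcChain γ piece m t l) :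
      ArcChain γ piece s t (i :: l)

namespace ArcChain

variable {α X : Type*} {γ : ℝ → X} {piece : α → Set X} {s m t : ℝ} {l l' : List α}

theorem singleton {i : α} (hlt : s < t) (harc : Set.MapsTo γ (Set.Icc s t) (piece i)) :
    ArcChain γ piece s t [i] :=
  cons hlt harc (nil t)

theorem append (h : ArcChain γ piece s m l) (h' : ArcChain γ piece m t l') :
    ArcChain γ piece s t (l ++ l') := by
  induction h with
  | nil => exact h'
  | cons hlt harc _ ih => exact cons hlt harc (ih h')

theorem reverse (h : ArcChain γ piece s t l) {c : ℝ}
    (hrefl : ∀ i x, γ x ∈ piece i → γ (c - x) ∈ piece i) :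
    ArcChain γ piece (c - t) (c - s) l.reverse := by
  induction h with
  | nil => exact nil _
  | @cons s m t i l hlt harc _ ih =>
    rw [List.reverse_cons]
    refine ih.append (singleton (by linarith) fun x hx => ?_)
    have hmem : c - x ∈ Set.Icc s m := ⟨by linarith [hx.2], by linarith [hx.1]⟩
    simpa only [sub_sub_cancel] using hrefl i _ (harc hmem)

theorem ofFn {n : ℕ} {i : Fin n → α} {τ : Fin (n + 1) → ℝ} (hτ : StrictMono τ)
    (harc : ∀ j : Fin n, Set.MapsTo γ (Set.Icc (τ j.castSucc) (τ j.succ)) (piece (i j))) :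
    ArcChain γ piece (τ 0) (τ (Fin.last n)) (List.ofFn i) := by
  induction n with
  | zero => exact nil _
  | succ n ih =>
    rw [List.ofFn_succ]
    exact cons (hτ (Fin.succ_pos 0)) (harc 0)
      (ih (τ := fun j => τ j.succ) (hτ.comp (Fin.strictMono_succ)) fun j => harc j.succ)

theorem exists_breakpoints (h : ArcChain γ piece s t l) :
    ∃ τ : ℕ → ℝ, τ 0 = s ∧ τ l.length = t ∧ (∀ i < l.length, τ i < τ (i + 1)) ∧
      ∀ i (hi : i < l.length),
        Set.MapsTo γ (Set.Icc (τ i) (τ (i + 1))) (piece (l.get ⟨i, hi⟩)) := by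
  induction h with
  | nil s => exact ⟨fun _ => s, rfl, rfl, by simp, by simp⟩
  | @cons s m t i l hlt harc _ ih =>
    obtain ⟨τ, hτ₀, hτt, hτlt, hτarc⟩ := ih
    refine ⟨fun n => Nat.casesOn n s τ, rfl, hτt, ?_, ?_⟩
    · rintro (_ | n) hn
      · exact hlt.trans_eq hτ₀.symm
      · exact hτlt n (Nat.lt_of_succ_lt_succ hn)
    · rintro (_ | n) hn
      · exact harc.mono_left (Set.Icc_subset_Icc_right hτ₀.le)
      · exact hτarc n (Nat.lt_of_succ_lt_succ hn)

end ArcChain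

namespace BoundaryOrder

variable {α : Type} {piece : α → Set (ℝ × ℝ)} {l : List α}

theorem of_arcChain {p : ℝ} [Fact (0 < p)] {γ : AddCircle p → ℝ × ℝ} (hcont : Continuous γ)
    (hinj : Function.Injective γ) {s : ℝ}
    (hchain : ArcChain (fun x : ℝ => γ x) piece s (s + p) l) :
    BoundaryOrder (Set.range γ) piece l := by
  have hp : 0 < p := Fact.out
  obtain ⟨τ, hτ₀, hτt, hτlt, hτarc⟩ := hchain.exists_breakpoints
  refine ⟨fun t => γ ((s + p * t : ℝ) : AddCircle p), fun n => (τ n - s) / p, ?_, ?_, ?_, ?_, ?_,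
    ?_, ?_, ?_⟩
  · exact hcont.comp ((AddCircle.continuous_mk' p).comp (by fun_prop))
  · intro t
    simp only [mul_add, mul_one, ← add_assoc, AddCircle.coe_add_period]
  · intro t ht t' ht' heq
    have hmem : ∀ x ∈ Set.Ico (0 : ℝ) 1, s + p * x ∈ Set.Ico s (s + p) := fun x hx =>
      ⟨by nlinarith [hx.1], by nlinarith [hx.2]⟩
    have := (AddCircle.coe_eq_coe_iff_of_mem_Ico (hmem t ht) (hmem t' ht')).1 (hinj heq)
    exact mul_left_cancel₀ hp.ne' (add_left_cancel this)
  · refine Function.Surjective.range_comp (fun x => ?_) γ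
    obtain ⟨x, rfl⟩ := QuotientAddGroup.mk_surjective x
    exact ⟨(x - s) / p, by rw [mul_div_cancel₀ _ hp.ne', add_sub_cancel]⟩
  · simp only [hτ₀, sub_self, zero_div]
  · simp only [hτt, add_sub_cancel_left, div_self hp.ne']
  · intro i hi
    exact div_lt_div_of_pos_right (sub_lt_sub_right (hτlt i hi) s) hp
  · rintro i hi _ ⟨t, ⟨ht, ht'⟩, rfl⟩
    rw [div_le_iff₀' hp] at ht
    rw [le_div_iff₀' hp] at ht'
    exact hτarc i hi ⟨by linarith, by linarith⟩

theorem preimage {Bd : Set (ℝ × ℝ)} (h : BoundaryOrder Bd piece l) (e : ℝ × ℝ ≃ₜ ℝ × ℝ) :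
    BoundaryOrder (e ⁻¹' Bd) (fun i => e ⁻¹' piece i) l := by
  obtain ⟨γ, τ, hcont, hper, hinj, hrange, hτ₀, hτt, hτlt, hτarc⟩ := h
  refine ⟨e.symm ∘ γ, τ, e.symm.continuous.comp hcont, fun t => congrArg e.symm (hper t),
    e.symm.injective.comp_injOn hinj, ?_, hτ₀, hτt, hτlt, ?_⟩
  · rw [Set.range_comp, hrange, e.image_symm]
  · rintro i hi _ ⟨t, ht, rfl⟩
    simpa using hτarc i hi ⟨t, ht, rfl⟩

end BoundaryOrder

/-! ### The order of the squares along the boundary -/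

section FinChain

variable {n : ℕ} {δ : Fin (n + 2) → ℝ}

/-- The boundaries between the Voronoi cells of consecutive offsets. -/
noncomputable def cellBreak (δ : Fin (n + 2) → ℝ) (j : Fin (n + 1)) : ℝ :=
  (δ j.castSucc + δ j.succ) / 2

theorem strictMono_cellBreak (hδ : StrictMono δ) : StrictMono (cellBreak δ) := by
  intro i j hij
  have h₁ := hδ (Fin.castSucc_lt_castSucc_iff.2 hij)
  have h₂ := hδ (Fin.succ_lt_succ_iff.2 hij)
  unfold cellBreak
  linarith

theorem cellBreak_mem_Ioo (hδ : StrictMono δ) (j : Fin (n + 1)) :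
    cellBreak δ j ∈ Set.Ioo (δ ⊥ - 1 / 2) (δ ⊤ + 1 / 2) := by
  have h₁ := hδ.monotone (bot_le : ⊥ ≤ j.castSucc)
  have h₂ := hδ.monotone (le_top : j.succ ≤ ⊤)
  have h₃ := hδ (Fin.castSucc_lt_succ (i := j))
  unfold cellBreak
  constructor <;> linarith

theorem castSucc_covBy_succ (j : Fin n) : j.castSucc ⋖ j.succ :=
  ⟨Fin.castSucc_lt_succ, fun _ h h' => (Fin.castSucc_lt_iff_succ_le.1 h).not_gt h'⟩

theorem profile_eq_tent_of_cellBreak (hδ : StrictMono δ) {i : Fin (n + 2)} {s : ℝ}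
    (hleft : ∀ j, i = Fin.succ j → cellBreak δ j ≤ s)
    (hright : ∀ j, i = Fin.castSucc j → s ≤ cellBreak δ j) :
    profile δ s = tent (δ i) s := by
  refine (profile_eq_tent_iff hδ i s).2 ⟨fun p hp => ?_, fun p hp => ?_⟩
  · obtain ⟨j, rfl⟩ := Fin.exists_succ_eq.2 (Fin.ne_zero_of_lt hp.lt)
    obtain rfl := hp.unique_left (castSucc_covBy_succ j)
    exact hleft j rfl
  · obtain ⟨j, rfl⟩ := Fin.exists_castSucc_eq.2 (Fin.ne_last_of_lt hp.lt)
    obtain rfl := hp.unique_right (castSucc_covBy_succ j)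
    exact hright j rfl

/-- The indices other than the first and the last one, in increasing order. -/
def innerIndices (n : ℕ) : List (Fin (n + 2)) := List.ofFn fun j : Fin n => j.succ.castSucc

theorem isChain_innerIndices (n : ℕ) : (innerIndices n).IsChain (· < ·) := by
  apply List.Pairwise.isChain
  rw [innerIndices, List.pairwise_ofFn]
  exact fun i j hij => Fin.castSucc_lt_castSucc_iff.2 (Fin.succ_lt_succ_iff.2 hij)

theorem mem_innerIndices {i : Fin (n + 2)} : i ∈ innerIndices n ↔ i ≠ 0 ∧ i ≠ Fin.last (n + 1) := by
  rw [innerIndices, List.mem_ofFn]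
  constructor
  · rintro ⟨j, rfl⟩
    exact ⟨by simp [Fin.ext_iff], (Fin.castSucc_lt_last _).ne⟩
  · rintro ⟨hzero, hlast⟩
    obtain ⟨j, rfl⟩ := Fin.exists_castSucc_eq.2 hlast
    obtain ⟨l, rfl⟩ := Fin.exists_succ_eq.2 (Fin.castSucc_ne_zero_iff.1 hzero)
    exact ⟨l, rfl⟩

/-- The simple closed curve `symmGraph (profile δ)`, parameterized by the circle. -/
noncomputable def profileCurve (δ : Fin (n + 2) → ℝ) : Real.Angle → ℝ × ℝ :=
  archCurve (profile δ) (δ ⊥ - 1 / 2) (δ ⊤ + 1 / 2)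

/-- The angle in `(0, π)` at which `profileCurve δ` passes from the `j`-th cell to the next one. -/
noncomputable def breakAngle (δ : Fin (n + 2) → ℝ) (j : Fin (n + 1)) : ℝ :=
  abscissaAngle (δ ⊥ - 1 / 2) (δ ⊤ + 1 / 2) (cellBreak δ j)

theorem strictMono_breakAngle (hδ : StrictMono δ) : StrictMono (breakAngle δ) := fun i j hij =>
  strictMonoOn_abscissaAngle (Set.Ioo_subset_Icc_self (cellBreak_mem_Ioo hδ i))
    (Set.Ioo_subset_Icc_self (cellBreak_mem_Ioo hδ j)) (strictMono_cellBreak hδ hij)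

theorem breakAngle_mem_Ioo (hδ : StrictMono δ) (j : Fin (n + 1)) :
    breakAngle δ j ∈ Set.Ioo 0 Real.pi :=
  abscissaAngle_mem_Ioo (cellBreak_mem_Ioo hδ j)

theorem profileCurve_mem_symmGraph_tent (hδ : StrictMono δ) (hov : ∀ i j, i ⋖ j → δ j - δ i < 1)
    {i : Fin (n + 2)} {θ : ℝ}
    (hleft : ∀ j, i = Fin.succ j → θ ∈ Set.Icc (breakAngle δ j) (2 * Real.pi - breakAngle δ j))
    (hright : ∀ j, i = Fin.castSucc j → |θ| ≤ breakAngle δ j) :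
    profileCurve δ θ ∈ symmGraph (tent (δ i)) := by
  have hf := isArch_profile hδ hov
  have habs : ∀ j, abscissa (δ ⊥ - 1 / 2) (δ ⊤ + 1 / 2) (breakAngle δ j) = cellBreak δ j :=
    fun j => abscissa_abscissaAngle hf.lt (Set.Ioo_subset_Icc_self (cellBreak_mem_Ioo hδ j))
  refine hf.archCurve_mem_symmGraph_iff.2 (profile_eq_tent_of_cellBreak hδ ?_ ?_)
  · intro j hj
    rw [← habs j]
    exact le_abscissa_of_mem_Icc hf.lt (breakAngle_mem_Ioo hδ j).1.le (hleft j hj)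
  · intro j hj
    rw [← habs j]
    exact abscissa_le_of_abs_le hf.lt (hright j hj) (breakAngle_mem_Ioo hδ j).2.le

theorem arcChain_profileCurve_zero (hδ : StrictMono δ) (hov : ∀ i j, i ⋖ j → δ j - δ i < 1) :
    ArcChain (fun θ : ℝ => profileCurve δ θ) (fun i => symmGraph (tent (δ i)))
      (-breakAngle δ 0) (breakAngle δ 0) [0] := by
  refine ArcChain.singleton (neg_lt_self (breakAngle_mem_Ioo hδ 0).1) fun θ hθ =>
    profileCurve_mem_symmGraph_tent hδ hov (fun j hj => absurd hj.symm (Fin.succ_ne_zero j)) ?_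
  intro j hj
  obtain rfl : j = 0 := Fin.castSucc_injective _ hj.symm
  exact abs_le.2 hθ

theorem arcChain_profileCurve_last (hδ : StrictMono δ) (hov : ∀ i j, i ⋖ j → δ j - δ i < 1) :
    ArcChain (fun θ : ℝ => profileCurve δ θ) (fun i => symmGraph (tent (δ i)))
      (breakAngle δ (Fin.last n)) (2 * Real.pi - breakAngle δ (Fin.last n))
      [Fin.last (n + 1)] := by
  have hlt := (breakAngle_mem_Ioo hδ (Fin.last n)).2
  refine ArcChain.singleton (by linarith) fun θ hθ =>
    profileCurve_mem_symmGraph_tent hδ hov ?_ fun j hj => absurd hj.symm (Fin.castSucc_ne_last j)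
  intro j hj
  obtain rfl : j = Fin.last n := Fin.succ_injective _ hj.symm
  exact hθ

theorem arcChain_profileCurve_innerIndices (hδ : StrictMono δ)
    (hov : ∀ i j, i ⋖ j → δ j - δ i < 1) :
    ArcChain (fun θ : ℝ => profileCurve δ θ) (fun i => symmGraph (tent (δ i)))
      (breakAngle δ 0) (breakAngle δ (Fin.last n)) (innerIndices n) := by
  refine ArcChain.ofFn (strictMono_breakAngle hδ) fun j θ hθ =>
    profileCurve_mem_symmGraph_tent hδ hov ?_ ?_
  · intro l hl
    obtain rfl : l = j.castSucc := Fin.succ_injective _ hl.symm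
    have hj := (breakAngle_mem_Ioo hδ j.castSucc).2
    have hj' := (breakAngle_mem_Ioo hδ j.succ).2
    exact ⟨hθ.1, by linarith [hθ.2]⟩
  · intro l hl
    obtain rfl : l = j.succ := Fin.castSucc_injective _ hl.symm
    rw [abs_of_nonneg ((breakAngle_mem_Ioo hδ j.castSucc).1.le.trans hθ.1)]
    exact hθ.2

theorem boundaryOrder_symmGraph_profile (hδ : StrictMono δ)
    (hov : ∀ i j, i ⋖ j → δ j - δ i < 1) :
    BoundaryOrder (symmGraph (profile δ)) (fun i => symmGraph (tent (δ i)))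
      ([0] ++ innerIndices n ++ [Fin.last (n + 1)] ++ (innerIndices n).reverse) := by
  have hf := isArch_profile hδ hov
  have hinner := arcChain_profileCurve_innerIndices hδ hov
  have hreturn := hinner.reverse (c := 2 * Real.pi) fun i θ hθ => by
    rw [profileCurve, hf.archCurve_mem_symmGraph_iff] at hθ ⊢
    rwa [abscissa_two_pi_sub]
  have hchain := (((arcChain_profileCurve_zero hδ hov).append hinner).append
    (arcChain_profileCurve_last hδ hov)).append hreturn
  rw [show 2 * Real.pi - breakAngle δ 0 = -breakAngle δ 0 + 2 * Real.pi by ring] at hchain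
  have : Fact (0 < 2 * Real.pi) := ⟨Real.two_pi_pos⟩
  rw [← hf.range_archCurve]
  exact BoundaryOrder.of_arcChain hf.continuous_archCurve hf.injective_archCurve hchain

end FinChain

/-! ### Diagonal coordinates -/

/-- The homeomorphism `p ↦ (s, d)` to coordinates along and across the line of slope one, normalized
so that the unit square with upper-left corner `b` becomes the diamond `|d| ≤ 1/2 - |s|`. -/
noncomputable def diagCoord (b : ℝ × ℝ) : ℝ × ℝ ≃ₜ ℝ × ℝ where
  toFun p := ((p.1 - b.1 + (p.2 - b.2)) / 2, (p.1 - b.1 - (p.2 - b.2) - 1) / 2)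
  invFun q := (b.1 + q.1 + q.2 + 1 / 2, b.2 + q.1 - q.2 - 1 / 2)
  left_inv p := by ext <;> ring
  right_inv q := by ext <;> ring
  continuous_toFun := by fun_prop
  continuous_invFun := by fun_prop

theorem ulSq_eq_preimage_diagCoord (b : ℝ × ℝ) (c : ℝ) :
    ulSq (b.1 + c, b.2 + c) = diagCoord b ⁻¹' symmRegion (tent c) := by
  ext p
  simp only [ulSq, Set.mem_prod, Set.mem_Icc, Set.mem_preimage, symmRegion, Set.mem_ofPred_eq, tent,
    diagCoord, Homeomorph.homeomorph_mk_coe, Equiv.coe_fn_mk]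
  constructor
  · rintro ⟨⟨h₁, h₂⟩, h₃, h₄⟩
    rw [le_sub_comm, abs_le]
    rcases abs_cases ((p.1 - b.1 - (p.2 - b.2) - 1) / 2) with ⟨h, -⟩ | ⟨h, -⟩ <;>
      constructor <;> linarith
  · intro h
    have hd := le_abs_self ((p.1 - b.1 - (p.2 - b.2) - 1) / 2)
    have hd' := neg_le_abs ((p.1 - b.1 - (p.2 - b.2) - 1) / 2)
    have hs := le_abs_self ((p.1 - b.1 + (p.2 - b.2)) / 2 - c)
    have hs' := neg_le_abs ((p.1 - b.1 + (p.2 - b.2)) / 2 - c)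
    exact ⟨⟨by linarith, by linarith⟩, by linarith, by linarith⟩

theorem frontier_ulSq (b : ℝ × ℝ) (c : ℝ) :
    frontier (ulSq (b.1 + c, b.2 + c)) = diagCoord b ⁻¹' symmGraph (tent c) := by
  rw [ulSq_eq_preimage_diagCoord, ← (diagCoord b).preimage_frontier,
    frontier_symmRegion (continuous_tent c)]

theorem frontier_iUnion_ulSq {ι : Type*} [Fintype ι] [Nonempty ι] (b : ℝ × ℝ) (δ : ι → ℝ) :
    frontier (⋃ i, ulSq (b.1 + δ i, b.2 + δ i)) = diagCoord b ⁻¹' symmGraph (profile δ) := by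
  simp only [ulSq_eq_preimage_diagCoord]
  rw [← Set.preimage_iUnion, ← symmRegion_profile, ← (diagCoord b).preimage_frontier,
    frontier_symmRegion (continuous_profile δ)]

/-! ### The four-sided model -/

/-- The corners of the unit square in clockwise order; only the indices below `4` matter. -/
def unitSquareCorner : ℕ → ℝ × ℝ
  | 0 => (0, 0)
  | 1 => (0, 1)
  | 2 => (1, 1)
  | _ => (1, 0)

theorem convexCW_unitSquareCorner : ConvexCW unitSquareCorner 4 := by
  intro i hi j hj hne hne'
  interval_cases i <;> interval_cases j <;> simp_all [unitSquareCorner, cross2]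

theorem exists_strictMono_forall_mem_Ioo (k : ℕ) :
    ∃ x : Fin k → ℝ, StrictMono x ∧ ∀ i, x i ∈ Set.Ioo (0 : ℝ) 1 := by
  refine ⟨fun i => (i + 1) / (k + 1), fun i j hij => ?_, fun i => ⟨by positivity, ?_⟩⟩
  · have : (i : ℝ) < j := mod_cast hij
    dsimp only
    gcongr
  · rw [div_lt_one (by positivity)]
    exact_mod_cast Nat.succ_lt_succ i.isLt

theorem exists_antipodal_placement (k : ℕ) :
    ∃ par : Fin k → Bool → ℝ, (∀ i bb, par i bb ∈ Set.Ioo (0 : ℝ) 1) ∧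
      ∀ i j, (par i false < par j false ↔ i < j) ∧ (par i true < par j true ↔ j < i) := by
  obtain ⟨x, hx, hmem⟩ := exists_strictMono_forall_mem_Ioo k
  refine ⟨fun i bb => cond bb (1 - x i) (x i), fun i bb => ?_, fun i j => ⟨hx.lt_iff_lt, ?_⟩⟩
  · obtain ⟨hpos, hlt⟩ := hmem i
    cases bb
    · exact ⟨hpos, hlt⟩
    · exact ⟨sub_pos.2 hlt, sub_lt_self 1 hpos⟩
  · exact (sub_lt_sub_iff_left 1).trans hx.lt_iff_lt

theorem exists_quadrilateral_model {k : ℕ} (lo hi : Fin k) :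
    ∃ (corner : ℕ → ℝ × ℝ) (pairOf : Fin k → ℕ) (par : Fin k → Bool → ℝ),
      ConvexCW corner 4 ∧
      (∀ i : Fin k, pairOf i = if i = lo ∨ i = hi then 1 else 0) ∧
      (∀ i bb, par i bb ∈ Set.Ioo (0 : ℝ) 1) ∧
      (∀ i j : Fin k, i ≠ j → pairOf i = pairOf j → ∀ bb, par i bb ≠ par j bb) ∧
      (∀ i j : Fin k, i ≠ lo → i ≠ hi → j ≠ lo → j ≠ hi →
        ((par i false < par j false ↔ i < j) ∧ (par i true < par j true ↔ j < i))) := by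
  obtain ⟨par, hmem, hord⟩ := exists_antipodal_placement k
  refine ⟨unitSquareCorner, _, par, convexCW_unitSquareCorner, fun _ => rfl, hmem, ?_,
    fun i j _ _ _ _ => hord i j⟩
  rintro i j hne - (_ | _)
  · rcases hne.lt_or_gt with h | h
    · exact ((hord i j).1.2 h).ne
    · exact ((hord j i).1.2 h).ne'
  · rcases hne.lt_or_gt with h | h
    · exact ((hord j i).2.2 h).ne'
    · exact ((hord i j).2.2 h).ne

theorem canonical_cluster_boundary_and_polylink_modeling_general
    (k : ℕ) (hk : 2 ≤ k) (b : ℝ × ℝ) (δ : Fin k → ℝ)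
    (hmono : StrictMono δ)
    (hoverlap : ∀ i j : Fin k, i ⋖ j → δ j - δ i < 1) :
    ∀ S : Fin k → Set (ℝ × ℝ),
      (∀ i, S i = ulSq (b.1 + δ i, b.2 + δ i)) →
    ∀ U : Set (ℝ × ℝ), U = ⋃ i, S i →
    ∃ (lo hi : Fin k) (mid : List (Fin k)),
      lo = ⟨0, by omega⟩ ∧ hi = ⟨k - 1, by omega⟩ ∧
      mid.IsChain (· < ·) ∧ (∀ i : Fin k, i ∈ mid ↔ (i ≠ lo ∧ i ≠ hi)) ∧
      BoundaryOrder (frontier U) (fun i => frontier (S i))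
        ([lo] ++ mid ++ [hi] ++ mid.reverse) ∧
      IsConnected (frontier U ∩ frontier (S lo)) ∧
      IsConnected (frontier U ∩ frontier (S hi)) ∧
      (∀ i : Fin k, i ≠ lo → i ≠ hi →
        ¬ IsPreconnected (frontier U ∩ frontier (S i)) ∧
        ∃ A B : Set (ℝ × ℝ), IsConnected A ∧ IsConnected B ∧ Disjoint A B ∧
          A ∪ B = frontier U ∩ frontier (S i)) ∧
      (∃ (corner : ℕ → ℝ × ℝ) (pairOf : Fin k → ℕ) (par : Fin k → Bool → ℝ),
        ConvexCW corner 4 ∧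
        (∀ i : Fin k, pairOf i = if i = lo ∨ i = hi then 1 else 0) ∧
        (∀ i bb, par i bb ∈ Set.Ioo (0 : ℝ) 1) ∧
        (∀ i j : Fin k, i ≠ j → pairOf i = pairOf j → ∀ bb, par i bb ≠ par j bb) ∧
        (∀ i j : Fin k, i ≠ lo → i ≠ hi → j ≠ lo → j ≠ hi →
          ((par i false < par j false ↔ i < j) ∧
            (par i true < par j true ↔ j < i)))) := by
  obtain ⟨n, rfl⟩ := Nat.exists_eq_add_of_le' hk
  intro S hS U hU
  obtain rfl : S = fun i => ulSq (b.1 + δ i, b.2 + δ i) := funext hS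
  simp only [hU, frontier_iUnion_ulSq, frontier_ulSq, ← Set.preimage_inter,
    (diagCoord b).isConnected_preimage, (diagCoord b).isPreconnected_preimage]
  refine ⟨0, Fin.last (n + 1), innerIndices n, rfl, rfl, isChain_innerIndices n,
    fun _ => mem_innerIndices, (boundaryOrder_symmGraph_profile hmono hoverlap).preimage _,
    isConnected_symmGraph_profile_inter_tent_of_zero hmono hoverlap
      (bot_sub_half_mem_exposedCell hmono) (profile_bot_sub_half hmono),
    isConnected_symmGraph_profile_inter_tent_of_zero hmono hoverlap
      (top_add_half_mem_exposedCell hmono) (profile_top_add_half hmono), fun i hbot htop => ?_,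
    exists_quadrilateral_model _ _⟩
  obtain ⟨hnot, A, B, hA, hB, hdisj, hAB⟩ :=
    exists_two_arcs_symmGraph_profile_inter_tent hmono hoverlap hbot htop
  exact ⟨hnot, _, _, (diagCoord b).isConnected_preimage.2 hA,
    (diagCoord b).isConnected_preimage.2 hB, hdisj.preimage _, by rw [← Set.preimage_union, hAB]⟩

/-- In a canonical intersection-link representation of a
cluster of size `k ≥ 3` (unit squares `S i` whose upper-left corners lie, with
strictly increasing offsets `δ i`, on a line of slope one, all pairwise
overlapping), walking along the boundary of the union `U` of the squares, the
`k - 2` middle vertices appear exactly twice, forming two maximal sequences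
that occur in opposite orders, and these two sequences are separated by the
two extreme vertices, each of which appears exactly once along the boundary.
Consequently, such a cluster can be modeled in a PolyLink representation as a
(convex) polygon with four sides in which one pair of antipodal sides carries
the `k - 2` doubly-appearing vertices (in opposite orders) and the other two
sides each carry one of the two remaining vertices. -/
theorem canonical_cluster_boundary_and_polylink_modeling
    (k : ℕ) (hk : 3 ≤ k) (b : ℝ × ℝ) (δ : Fin k → ℝ)
    (hmono : StrictMono δ)
    (hoverlap : ∀ i j : Fin k, δ j - δ i < 1) :
    ∀ S : Fin k → Set (ℝ × ℝ),
      (∀ i, S i = ulSq (b.1 + δ i, b.2 + δ i)) →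
    ∀ U : Set (ℝ × ℝ), U = ⋃ i, S i →
    ∃ (lo hi : Fin k) (mid : List (Fin k)),
      lo = ⟨0, by omega⟩ ∧ hi = ⟨k - 1, by omega⟩ ∧
      mid.Chain' (· < ·) ∧ (∀ i : Fin k, i ∈ mid ↔ (i ≠ lo ∧ i ≠ hi)) ∧
      -- the boundary of `U` consists, in cyclic order, of: an arc on `S lo`,
      -- arcs on the middle squares in increasing order, an arc on `S hi`, and
      -- arcs on the middle squares in the reverse (opposite) order:
      BoundaryOrder (frontier U) (fun i => frontier (S i))
        ([lo] ++ mid ++ [hi] ++ mid.reverse) ∧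
      -- each extreme square appears exactly once (one boundary arc):
      IsConnected (frontier U ∩ frontier (S lo)) ∧
      IsConnected (frontier U ∩ frontier (S hi)) ∧
      -- each middle square appears exactly twice (two disjoint boundary arcs):
      (∀ i : Fin k, i ≠ lo → i ≠ hi →
        ¬ IsPreconnected (frontier U ∩ frontier (S i)) ∧
        ∃ A B : Set (ℝ × ℝ), IsConnected A ∧ IsConnected B ∧ Disjoint A B ∧
          A ∪ B = frontier U ∩ frontier (S i)) ∧
      -- PolyLink modeling by a four-sided polygon: the middle vertices lie on
      -- the antipodal side pair `{0, 2}`, in opposite orders, while each of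
      -- the two extreme vertices is carried by one of the two other sides:
      (∃ (corner : ℕ → ℝ × ℝ) (pairOf : Fin k → ℕ) (par : Fin k → Bool → ℝ),
        ConvexCW corner 4 ∧
        (∀ i : Fin k, pairOf i = if i = lo ∨ i = hi then 1 else 0) ∧
        (∀ i bb, par i bb ∈ Set.Ioo (0 : ℝ) 1) ∧
        (∀ i j : Fin k, i ≠ j → pairOf i = pairOf j → ∀ bb, par i bb ≠ par j bb) ∧
        (∀ i j : Fin k, i ≠ lo → i ≠ hi → j ≠ lo → j ≠ hi →
          ((par i false < par j false ↔ i < j) ∧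
            (par i true < par j true ↔ j < i)))) := by
  exact canonical_cluster_boundary_and_polylink_modeling_general k (by omega) b δ hmono
    fun i j _ => hoverlap i j

end Paper
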